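/- Let X be a separable Banach space and let μ0 be a Borel probability measure on X such that there exists α > 0 with ∫_X exp(α‖u‖_X²) dμ0(u) < ∞ and such that μ0 assigns positive mass to every open ball of X. Let Φ : X → ℝ and, for each N ∈ ℕ, Φ^N : X → ℝ be Borel measurable and satisfy, with constants uniform in N: (i') for every ε > 0 there is M = M(ε) ∈ ℝ with Φ(u) ≥ M − ε‖u‖_X² and Φ^N(u) ≥ M − ε‖u‖_X² for all u ∈ X; (ii') for every r > 0 there is K = K(r) > 0 with Φ(u) ≤ K and Φ^N(u) ≤ K whenever ‖u‖_X < r. Assume moreover that for every ε > 0 there is K' = K'(ε) > 0 such that |Φ(u) − Φ^N(u)| ≤ K' exp(ε‖u‖_X²) Ψ(N) for all u ∈ X and all N, where Ψ(N) → 0 as N → ∞. Let μ and μ^N be the probability measures with densities exp(−Φ(u))/Z and exp(−Φ^N(u))/Z^N with respect to μ0, where Z = ∫_X exp(−Φ(u)) dμ0(u) and Z^N = ∫_X exp(−Φ^N(u)) dμ0(u). Then there is a constant C, independent of N, such that for every bounded continuous ψ : X → ℝ with Lipschitz constant at most 1, |∫_X ψ dμ − ∫_X ψ dμ^N| ≤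 C Ψ(N); that is, W1(μ, μ^N) ≤ C Ψ(N). -/

import Mathlib

open MeasureTheory Filter

/-- The posterior measure with density `exp(-Φ(u)) / Z` with respect to `μ0`,
where `Z = ∫ exp(-Φ(u)) dμ0(u)`. -/
noncomputable def posterior {X : Type*} [MeasurableSpace X] (μ0 : Measure X) (Φ : X → ℝ) :
    Measure X :=
  μ0.withDensity fun u =>
    ENNReal.ofReal (Real.exp (-Φ u)) / ∫⁻ u', ENNReal.ofReal (Real.exp (-Φ u')) ∂μ0

/-! If `μ₁`, `μ₂` have densities `exp (-Φ₁) / Z₁`, `exp (-Φ₂) / Z₂` with respect to `μ`, then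
centring `ψ` at its mean `m` under `μ₂` eliminates the difference of the normalising constants:
`∫ ψ ∂μ₁ - ∫ ψ ∂μ₂ = Z₁⁻¹ * ∫ (ψ - m) * (exp (-Φ₁) - exp (-Φ₂)) ∂μ`.
For Lipschitz `ψ` the factor `ψ - m` grows at most linearly, and quadratic lower bounds on the
potentials control `|exp (-Φ₁) - exp (-Φ₂)|` by `|Φ₁ - Φ₂|` times the exponential of a small
multiple of `‖u‖ ^ 2`, so the square-exponential moment of `μ` dominates the integrand. The
normalising constants are uniformly bounded below because some ball centred at `0` has positive
mass and the potentials are bounded above on it. -/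

section Elementary

lemma abs_exp_neg_sub_exp_neg_le {x y m : ℝ} (hx : m ≤ x) (hy : m ≤ y) :
    |Real.exp (-x) - Real.exp (-y)| ≤ Real.exp (-m) * |x - y| := by
  have hderiv : ∀ t ∈ Set.Ici m,
      HasDerivWithinAt (fun s : ℝ => Real.exp (-s)) (-Real.exp (-t)) (Set.Ici m) t := fun t _ => by
    simpa using (hasDerivAt_neg t).exp.hasDerivWithinAt
  have hbound : ∀ t ∈ Set.Ici m, ‖-Real.exp (-t)‖ ≤ Real.exp (-m) := fun t ht => by
    simpa using ht
  exact (convex_Ici m).norm_image_sub_le_of_norm_hasDerivWithin_le hderiv hbound hy hx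

lemma le_exp_mul_sq_div {a : ℝ} (ha : 0 < a) (t : ℝ) :
    t ≤ Real.exp (a * t ^ 2) / (2 * √a) := by
  rw [le_div_iff₀ (by positivity)]
  calc t * (2 * √a) ≤ (√a * t) ^ 2 + 1 := by linarith [sq_nonneg (√a * t - 1)]
    _ = a * t ^ 2 + 1 := by rw [mul_pow, Real.sq_sqrt ha.le]
    _ ≤ Real.exp (a * t ^ 2) := Real.add_one_le_exp _

end Elementary

section Posterior

variable {X : Type*} [MeasurableSpace X] {μ : Measure X}

lemma posterior_eq_tilted {Φ : X → ℝ} (hΦ : Integrable (fun u => Real.exp (-Φ u)) μ) :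
    posterior μ Φ = μ.tilted fun u => -Φ u := by
  rcases eq_zero_or_neZero μ with rfl | _
  · simp [posterior]
  have hZ : 0 < ∫ u, Real.exp (-Φ u) ∂μ := integral_exp_pos hΦ
  simp only [posterior, Measure.tilted, ENNReal.ofReal_div_of_pos hZ]
  rw [ofReal_integral_eq_lintegral_ofReal hΦ (ae_of_all _ fun u => (Real.exp_pos _).le)]

lemma isProbabilityMeasure_posterior [NeZero μ] {Φ : X → ℝ}
    (hΦ : Integrable (fun u => Real.exp (-Φ u)) μ) : IsProbabilityMeasure (posterior μ Φ) :=
  posterior_eq_tilted hΦ ▸ isProbabilityMeasure_tilted hΦ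

lemma integrable_posterior_iff {Φ : X → ℝ} (hΦ : Integrable (fun u => Real.exp (-Φ u)) μ)
    {ψ : X → ℝ} :
    Integrable ψ (posterior μ Φ) ↔ Integrable (fun u => ψ u * Real.exp (-Φ u)) μ := by
  simp only [posterior_eq_tilted hΦ, integrable_tilted_iff hΦ, smul_eq_mul, mul_comm]

lemma integral_posterior {Φ : X → ℝ} (hΦ : Integrable (fun u => Real.exp (-Φ u)) μ)
    (ψ : X → ℝ) :
    ∫ u, ψ u ∂posterior μ Φ = (∫ u, ψ u * Real.exp (-Φ u) ∂μ) / ∫ u, Real.exp (-Φ u) ∂μ := by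
  rw [posterior_eq_tilted hΦ, integral_tilted, ← integral_div]
  congr with u
  rw [smul_eq_mul]
  ring

lemma integral_posterior_sub_integral_posterior [NeZero μ] {Φ₁ Φ₂ ψ : X → ℝ}
    (hΦ₁ : Integrable (fun u => Real.exp (-Φ₁ u)) μ)
    (hΦ₂ : Integrable (fun u => Real.exp (-Φ₂ u)) μ)
    (hψ₁ : Integrable ψ (posterior μ Φ₁)) (hψ₂ : Integrable ψ (posterior μ Φ₂)) :
    ∫ u, ψ u ∂posterior μ Φ₁ - ∫ u, ψ u ∂posterior μ Φ₂ =
      (∫ u, (ψ u - ∫ v, ψ v ∂posterior μ Φ₂) * (Real.exp (-Φ₁ u) - Real.exp (-Φ₂ u)) ∂μ) /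
        ∫ u, Real.exp (-Φ₁ u) ∂μ := by
  have hZ₁ : 0 < ∫ u, Real.exp (-Φ₁ u) ∂μ := integral_exp_pos hΦ₁
  have hZ₂ : 0 < ∫ u, Real.exp (-Φ₂ u) ∂μ := integral_exp_pos hΦ₂
  rw [integrable_posterior_iff hΦ₁] at hψ₁
  rw [integrable_posterior_iff hΦ₂] at hψ₂
  set m := ∫ v, ψ v ∂posterior μ Φ₂ with hm
  have hmZ₂ : ∫ u, ψ u * Real.exp (-Φ₂ u) ∂μ = m * ∫ u, Real.exp (-Φ₂ u) ∂μ := by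
    rw [hm, integral_posterior hΦ₂, div_mul_cancel₀ _ hZ₂.ne']
  have hexpand : ∫ u, (ψ u - m) * (Real.exp (-Φ₁ u) - Real.exp (-Φ₂ u)) ∂μ =
      (∫ u, ψ u * Real.exp (-Φ₁ u) ∂μ - m * ∫ u, Real.exp (-Φ₁ u) ∂μ) -
        (∫ u, ψ u * Real.exp (-Φ₂ u) ∂μ - m * ∫ u, Real.exp (-Φ₂ u) ∂μ) := by
    rw [← integral_const_mul, ← integral_const_mul, ← integral_sub hψ₁ (hΦ₁.const_mul m),
      ← integral_sub hψ₂ (hΦ₂.const_mul m),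
      ← integral_sub (by exact hψ₁.sub (hΦ₁.const_mul m)) (by exact hψ₂.sub (hΦ₂.const_mul m))]
    congr with u
    ring
  rw [integral_posterior hΦ₁, hexpand, hmZ₂]
  field_simp
  ring

lemma exp_neg_mul_measureReal_le_integral {Φ : X → ℝ}
    (hΦ : Integrable (fun u => Real.exp (-Φ u)) μ) {s : Set X} {K : ℝ} (hK : ∀ u ∈ s, Φ u ≤ K) :
    Real.exp (-K) * μ.real s ≤ ∫ u, Real.exp (-Φ u) ∂μ := by
  have hs : s ⊆ {u | Real.exp (-K) ≤ Real.exp (-Φ u)} := fun u hu =>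
    Real.exp_le_exp.2 (neg_le_neg (hK u hu))
  calc Real.exp (-K) * μ.real s
      ≤ Real.exp (-K) * μ.real {u | Real.exp (-K) ≤ Real.exp (-Φ u)} := by
        gcongr
        exact (hΦ.measure_ge_lt_top (Real.exp_pos _)).ne
    _ ≤ ∫ u, Real.exp (-Φ u) ∂μ :=
        mul_meas_ge_le_integral_of_nonneg (ae_of_all _ fun u => (Real.exp_pos _).le) hΦ _

end Posterior

section Lipschitz

variable {X : Type*} [SeminormedAddCommGroup X] {L : NNReal} {ψ : X → ℝ}

lemma abs_sub_le_of_lipschitzWith (hψ : LipschitzWith L ψ) (u v : X) :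
    |ψ u - ψ v| ≤ L * (‖u‖ + ‖v‖) :=
  (hψ.norm_sub_le u v).trans (by gcongr; exact norm_sub_le u v)

variable [MeasurableSpace X] [OpensMeasurableSpace X] {ν : Measure X}

lemma integrable_of_lipschitzWith [IsFiniteMeasure ν] (hψ : LipschitzWith L ψ)
    (hν : Integrable (fun u : X => ‖u‖) ν) : Integrable ψ ν := by
  refine ((hν.const_mul (L : ℝ)).add (integrable_const |ψ 0|)).mono'
    hψ.continuous.aestronglyMeasurable (ae_of_all _ fun u => ?_)
  have hdist : |ψ u - ψ 0| ≤ L * ‖u‖ := by simpa using abs_sub_le_of_lipschitzWith hψ u 0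
  calc ‖ψ u‖ ≤ |ψ u - ψ 0| + |ψ 0| := by simpa using abs_add_le (ψ u - ψ 0) (ψ 0)
    _ ≤ L * ‖u‖ + |ψ 0| := by gcongr

lemma abs_sub_integral_le_of_lipschitzWith [IsProbabilityMeasure ν] (hψ : LipschitzWith L ψ)
    (hν : Integrable (fun u : X => ‖u‖) ν) (u : X) :
    |ψ u - ∫ v, ψ v ∂ν| ≤ L * (‖u‖ + ∫ v, ‖v‖ ∂ν) := by
  calc |ψ u - ∫ v, ψ v ∂ν| = |∫ v, (ψ u - ψ v) ∂ν| := by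
        rw [integral_sub (integrable_const _) (integrable_of_lipschitzWith hψ hν),
          integral_const, probReal_univ, one_smul]
    _ ≤ ∫ v, L * (‖u‖ + ‖v‖) ∂ν := by
        rw [← Real.norm_eq_abs]
        refine norm_integral_le_of_norm_le ?_ (ae_of_all _ fun v => ?_)
        · exact ((integrable_const _).add hν).const_mul _
        · exact abs_sub_le_of_lipschitzWith hψ u v
    _ = L * (‖u‖ + ∫ v, ‖v‖ ∂ν) := by
        rw [integral_const_mul, integral_add (integrable_const _) hν, integral_const,
          probReal_univ, one_smul]

end Lipschitz

section SquareExponentialMoments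

variable {X : Type*} [SeminormedAddCommGroup X] [MeasurableSpace X] [OpensMeasurableSpace X]
  {μ : Measure X} {α β : ℝ}

lemma integrable_exp_mul_sq_norm_of_le
    (hμ : Integrable (fun u => Real.exp (α * ‖u‖ ^ 2)) μ) (hβ : β ≤ α) :
    Integrable (fun u => Real.exp (β * ‖u‖ ^ 2)) μ :=
  hμ.mono' (by fun_prop) (ae_of_all _ fun u => by
    rw [Real.norm_of_nonneg (Real.exp_pos _).le]
    gcongr)

lemma isFiniteMeasure_of_integrable_exp_mul_sq_norm
    (hμ : Integrable (fun u => Real.exp (α * ‖u‖ ^ 2)) μ) (hα : 0 ≤ α) : IsFiniteMeasure μ := by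
  have hone : Integrable (fun _ : X => (1 : ℝ)) μ := by
    simpa using integrable_exp_mul_sq_norm_of_le hμ hα
  exact (integrable_const_iff_isFiniteMeasure one_ne_zero).1 hone

lemma integrable_norm_mul_exp_mul_sq_norm
    (hμ : Integrable (fun u => Real.exp (α * ‖u‖ ^ 2)) μ) (hβ : β < α) :
    Integrable (fun u => ‖u‖ * Real.exp (β * ‖u‖ ^ 2)) μ := by
  refine (hμ.div_const (2 * √(α - β))).mono' (by fun_prop) (ae_of_all _ fun u => ?_)
  rw [Real.norm_of_nonneg (by positivity)]
  calc ‖u‖ * Real.exp (β * ‖u‖ ^ 2)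
      ≤ Real.exp ((α - β) * ‖u‖ ^ 2) / (2 * √(α - β)) * Real.exp (β * ‖u‖ ^ 2) := by
        gcongr
        exact le_exp_mul_sq_div (sub_pos.2 hβ) _
    _ = Real.exp (α * ‖u‖ ^ 2) / (2 * √(α - β)) := by
        rw [div_mul_eq_mul_div, ← Real.exp_add]
        ring_nf

end SquareExponentialMoments

section QuadraticLowerBound

variable {X : Type*} [SeminormedAddCommGroup X] {Φ : X → ℝ} {M ε : ℝ}

lemma exp_neg_le_of_quadratic_le (hlow : ∀ u, M - ε * ‖u‖ ^ 2 ≤ Φ u) (u : X) :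
    Real.exp (-Φ u) ≤ Real.exp (-M) * Real.exp (ε * ‖u‖ ^ 2) := by
  rw [← Real.exp_add]
  gcongr
  linarith [hlow u]

lemma norm_mul_exp_neg_le_of_quadratic_le (hlow : ∀ u, M - ε * ‖u‖ ^ 2 ≤ Φ u) (u : X) :
    ‖u‖ * Real.exp (-Φ u) ≤ Real.exp (-M) * (‖u‖ * Real.exp (ε * ‖u‖ ^ 2)) := by
  rw [mul_left_comm]
  gcongr
  exact exp_neg_le_of_quadratic_le hlow u

lemma abs_exp_neg_sub_exp_neg_le_of_quadratic_le {Φ₁ Φ₂ : X → ℝ} {δ D : ℝ}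
    (hlow₁ : ∀ u, M - ε * ‖u‖ ^ 2 ≤ Φ₁ u) (hlow₂ : ∀ u, M - ε * ‖u‖ ^ 2 ≤ Φ₂ u)
    (hdiff : ∀ u, |Φ₁ u - Φ₂ u| ≤ D * Real.exp (δ * ‖u‖ ^ 2)) (u : X) :
    |Real.exp (-Φ₁ u) - Real.exp (-Φ₂ u)| ≤
      Real.exp (-M) * D * Real.exp ((ε + δ) * ‖u‖ ^ 2) :=
  calc |Real.exp (-Φ₁ u) - Real.exp (-Φ₂ u)|
      ≤ Real.exp (-(M - ε * ‖u‖ ^ 2)) * |Φ₁ u - Φ₂ u| :=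
        abs_exp_neg_sub_exp_neg_le (hlow₁ u) (hlow₂ u)
    _ ≤ Real.exp (-(M - ε * ‖u‖ ^ 2)) * (D * Real.exp (δ * ‖u‖ ^ 2)) := by
        gcongr
        exact hdiff u
    _ = Real.exp (-M) * D * Real.exp ((ε + δ) * ‖u‖ ^ 2) := by
        rw [neg_sub, sub_eq_add_neg, add_mul, Real.exp_add, Real.exp_add]
        ring

variable [MeasurableSpace X] [OpensMeasurableSpace X] {μ : Measure X} {α : ℝ}

lemma integrable_exp_neg_of_quadratic_le (hμ : Integrable (fun u => Real.exp (α * ‖u‖ ^ 2)) μ)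
    (hΦ : AEMeasurable Φ μ) (hlow : ∀ u, M - ε * ‖u‖ ^ 2 ≤ Φ u) (hε : ε ≤ α) :
    Integrable (fun u => Real.exp (-Φ u)) μ :=
  ((integrable_exp_mul_sq_norm_of_le hμ hε).const_mul (Real.exp (-M))).mono'
    hΦ.neg.exp.aestronglyMeasurable (ae_of_all _ fun u => by
      simpa using exp_neg_le_of_quadratic_le hlow u)

lemma integrable_norm_posterior_of_quadratic_le
    (hμ : Integrable (fun u => Real.exp (α * ‖u‖ ^ 2)) μ)
    (hΦ : AEMeasurable Φ μ) (hlow : ∀ u, M - ε * ‖u‖ ^ 2 ≤ Φ u) (hε : ε < α) :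
    Integrable (fun u : X => ‖u‖) (posterior μ Φ) := by
  rw [integrable_posterior_iff (integrable_exp_neg_of_quadratic_le hμ hΦ hlow hε.le)]
  refine ((integrable_norm_mul_exp_mul_sq_norm hμ hε).const_mul (Real.exp (-M))).mono'
    (continuous_norm.aestronglyMeasurable.mul hΦ.neg.exp.aestronglyMeasurable)
    (ae_of_all _ fun u => ?_)
  rw [Real.norm_of_nonneg (by positivity)]
  exact norm_mul_exp_neg_le_of_quadratic_le hlow u

lemma integral_norm_posterior_le_of_quadratic_le
    (hμ : Integrable (fun u => Real.exp (α * ‖u‖ ^ 2)) μ)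
    (hΦ : AEMeasurable Φ μ) (hlow : ∀ u, M - ε * ‖u‖ ^ 2 ≤ Φ u) (hε : ε < α)
    {z : ℝ} (hz : 0 < z) (hZ : z ≤ ∫ u, Real.exp (-Φ u) ∂μ) :
    ∫ u, ‖u‖ ∂posterior μ Φ ≤ Real.exp (-M) * (∫ u, ‖u‖ * Real.exp (ε * ‖u‖ ^ 2) ∂μ) / z := by
  rw [integral_posterior (integrable_exp_neg_of_quadratic_le hμ hΦ hlow hε.le),
    ← integral_const_mul]
  have hnum : ∫ u, ‖u‖ * Real.exp (-Φ u) ∂μ ≤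
      ∫ u, Real.exp (-M) * (‖u‖ * Real.exp (ε * ‖u‖ ^ 2)) ∂μ :=
    integral_mono_of_nonneg (ae_of_all _ fun u => by positivity)
      ((integrable_norm_mul_exp_mul_sq_norm hμ hε).const_mul _)
      (ae_of_all _ (norm_mul_exp_neg_le_of_quadratic_le hlow))
  exact div_le_div₀ (integral_nonneg fun u => by positivity) hnum hz hZ

lemma integral_norm_add_mul_abs_exp_neg_sub_le_of_quadratic_le
    (hμ : Integrable (fun u => Real.exp (α * ‖u‖ ^ 2)) μ) {Φ₁ Φ₂ : X → ℝ} {δ D m₀ m : ℝ}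
    (hlow₁ : ∀ u, M - ε * ‖u‖ ^ 2 ≤ Φ₁ u) (hlow₂ : ∀ u, M - ε * ‖u‖ ^ 2 ≤ Φ₂ u)
    (hdiff : ∀ u, |Φ₁ u - Φ₂ u| ≤ D * Real.exp (δ * ‖u‖ ^ 2)) (hεδ : ε + δ < α)
    (hm₀ : 0 ≤ m₀) (hm : m₀ ≤ m) :
    ∫ u, (‖u‖ + m₀) * |Real.exp (-Φ₁ u) - Real.exp (-Φ₂ u)| ∂μ ≤
      Real.exp (-M) * (∫ u, (‖u‖ + m) * Real.exp ((ε + δ) * ‖u‖ ^ 2) ∂μ) * D := by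
  have hweight : Integrable (fun u => (‖u‖ + m) * Real.exp ((ε + δ) * ‖u‖ ^ 2)) μ := by
    simp only [add_mul (‖_‖)]
    exact (integrable_norm_mul_exp_mul_sq_norm hμ hεδ).add
      ((integrable_exp_mul_sq_norm_of_le hμ hεδ.le).const_mul m)
  calc ∫ u, (‖u‖ + m₀) * |Real.exp (-Φ₁ u) - Real.exp (-Φ₂ u)| ∂μ
      ≤ ∫ u, Real.exp (-M) * D * ((‖u‖ + m) * Real.exp ((ε + δ) * ‖u‖ ^ 2)) ∂μ := by
        refine integral_mono_of_nonneg (ae_of_all _ fun u => by positivity)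
          (hweight.const_mul _) (ae_of_all _ fun u => ?_)
        calc (‖u‖ + m₀) * |Real.exp (-Φ₁ u) - Real.exp (-Φ₂ u)|
            ≤ (‖u‖ + m) * (Real.exp (-M) * D * Real.exp ((ε + δ) * ‖u‖ ^ 2)) := by
              have : 0 ≤ m := hm₀.trans hm
              gcongr
              exact abs_exp_neg_sub_exp_neg_le_of_quadratic_le hlow₁ hlow₂ hdiff u
          _ = Real.exp (-M) * D * ((‖u‖ + m) * Real.exp ((ε + δ) * ‖u‖ ^ 2)) :=
              mul_left_comm _ _ _
    _ = Real.exp (-M) * (∫ u, (‖u‖ + m) * Real.exp ((ε + δ) * ‖u‖ ^ 2) ∂μ) * D := by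
        rw [integral_const_mul]
        ring

end QuadraticLowerBound

section Stability

variable {X : Type*} [SeminormedAddCommGroup X] [MeasurableSpace X] {μ : Measure X} [NeZero μ]

lemma exists_pos_le_integral_exp_neg [IsFiniteMeasure μ] (K : ℝ → ℝ) :
    ∃ z : ℝ, 0 < z ∧ ∀ Φ : X → ℝ, Integrable (fun u => Real.exp (-Φ u)) μ →
      (∀ r, 0 < r → ∀ u, ‖u‖ < r → Φ u ≤ K r) → z ≤ ∫ u, Real.exp (-Φ u) ∂μ := by
  obtain ⟨n, hball⟩ := exists_pos_ball (0 : X) (NeZero.ne μ)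
  have hn : (0 : ℝ) < n := Metric.nonempty_ball.1 (nonempty_of_measure_ne_zero hball.ne')
  refine ⟨Real.exp (-K n) * μ.real (Metric.ball 0 n),
    mul_pos (Real.exp_pos _) (ENNReal.toReal_pos hball.ne' (measure_ne_top _ _)),
    fun Φ hΦ hup => exp_neg_mul_measureReal_le_integral hΦ fun u hu => ?_⟩
  exact hup n hn u (mem_ball_zero_iff.1 hu)

variable [OpensMeasurableSpace X] {α : ℝ}

theorem abs_integral_posterior_sub_le {Φ₁ Φ₂ : X → ℝ}
    (hΦ₁ : Integrable (fun u => Real.exp (-Φ₁ u)) μ)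
    (hΦ₂ : Integrable (fun u => Real.exp (-Φ₂ u)) μ)
    (hnorm₁ : Integrable (fun u : X => ‖u‖) (posterior μ Φ₁))
    (hnorm₂ : Integrable (fun u : X => ‖u‖) (posterior μ Φ₂))
    {L : NNReal} {ψ : X → ℝ} (hψ : LipschitzWith L ψ) :
    |∫ u, ψ u ∂posterior μ Φ₁ - ∫ u, ψ u ∂posterior μ Φ₂| ≤
      L * (∫ u, (‖u‖ + ∫ v, ‖v‖ ∂posterior μ Φ₂) *
        |Real.exp (-Φ₁ u) - Real.exp (-Φ₂ u)| ∂μ) / ∫ u, Real.exp (-Φ₁ u) ∂μ := by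
  have := isProbabilityMeasure_posterior hΦ₁
  have := isProbabilityMeasure_posterior hΦ₂
  have hZ₁ : 0 < ∫ u, Real.exp (-Φ₁ u) ∂μ := integral_exp_pos hΦ₁
  set m := ∫ v, ‖v‖ ∂posterior μ Φ₂
  have : 0 ≤ m := integral_nonneg fun v => norm_nonneg v
  have hweight : Integrable
      (fun u => (‖u‖ + m) * |Real.exp (-Φ₁ u) - Real.exp (-Φ₂ u)|) μ := by
    have hweight₁ := (integrable_posterior_iff hΦ₁).1 (hnorm₁.add (integrable_const m))
    have hweight₂ := (integrable_posterior_iff hΦ₂).1 (hnorm₂.add (integrable_const m))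
    refine (hweight₁.sub hweight₂).abs.congr (ae_of_all _ fun u => ?_)
    simp only [Pi.sub_apply, Pi.add_apply]
    rw [← mul_sub, abs_mul, abs_of_nonneg (by positivity)]
  have hpointwise (u : X) :
      ‖(ψ u - ∫ v, ψ v ∂posterior μ Φ₂) * (Real.exp (-Φ₁ u) - Real.exp (-Φ₂ u))‖ ≤
        L * ((‖u‖ + m) * |Real.exp (-Φ₁ u) - Real.exp (-Φ₂ u)|) := by
    rw [norm_mul, Real.norm_eq_abs, Real.norm_eq_abs, ← mul_assoc]
    gcongr
    exact abs_sub_integral_le_of_lipschitzWith hψ hnorm₂ u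
  rw [integral_posterior_sub_integral_posterior hΦ₁ hΦ₂
    (integrable_of_lipschitzWith hψ hnorm₁) (integrable_of_lipschitzWith hψ hnorm₂),
    abs_div, abs_of_pos hZ₁, ← integral_const_mul]
  gcongr
  exact norm_integral_le_of_norm_le (hweight.const_mul _) (ae_of_all _ hpointwise)

theorem abs_integral_posterior_sub_le_of_quadratic_le
    (hμ : Integrable (fun u => Real.exp (α * ‖u‖ ^ 2)) μ) {Φ₁ Φ₂ : X → ℝ} {M ε δ D z m : ℝ}
    (hΦ₁ : AEMeasurable Φ₁ μ) (hΦ₂ : AEMeasurable Φ₂ μ)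
    (hlow₁ : ∀ u, M - ε * ‖u‖ ^ 2 ≤ Φ₁ u) (hlow₂ : ∀ u, M - ε * ‖u‖ ^ 2 ≤ Φ₂ u)
    (hdiff : ∀ u, |Φ₁ u - Φ₂ u| ≤ D * Real.exp (δ * ‖u‖ ^ 2))
    (hε : ε < α) (hεδ : ε + δ < α)
    (hz : 0 < z) (hZ : z ≤ ∫ u, Real.exp (-Φ₁ u) ∂μ) (hm : ∫ u, ‖u‖ ∂posterior μ Φ₂ ≤ m)
    {L : NNReal} {ψ : X → ℝ} (hψ : LipschitzWith L ψ) :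
    |∫ u, ψ u ∂posterior μ Φ₁ - ∫ u, ψ u ∂posterior μ Φ₂| ≤
      L * (Real.exp (-M) * (∫ u, (‖u‖ + m) * Real.exp ((ε + δ) * ‖u‖ ^ 2) ∂μ) * D) / z := by
  have hmoment : 0 ≤ ∫ u, ‖u‖ ∂posterior μ Φ₂ := integral_nonneg fun u => norm_nonneg u
  have hnum := integral_norm_add_mul_abs_exp_neg_sub_le_of_quadratic_le hμ hlow₁ hlow₂ hdiff hεδ
    hmoment hm
  have hnum_nonneg : 0 ≤ ∫ u, (‖u‖ + ∫ v, ‖v‖ ∂posterior μ Φ₂) *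
      |Real.exp (-Φ₁ u) - Real.exp (-Φ₂ u)| ∂μ := integral_nonneg fun u => by positivity
  refine (abs_integral_posterior_sub_le
    (integrable_exp_neg_of_quadratic_le hμ hΦ₁ hlow₁ hε.le)
    (integrable_exp_neg_of_quadratic_le hμ hΦ₂ hlow₂ hε.le)
    (integrable_norm_posterior_of_quadratic_le hμ hΦ₁ hlow₁ hε)
    (integrable_norm_posterior_of_quadratic_le hμ hΦ₂ hlow₂ hε) hψ).trans ?_
  exact div_le_div₀ (by positivity [hnum_nonneg.trans hnum]) (by gcongr) hz hZ

theorem stmt5_general {ι : Type*} (hα : 0 < α)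
    (hμ : Integrable (fun u => Real.exp (α * ‖u‖ ^ 2)) μ)
    {Φ : X → ℝ} {Φ' : ι → X → ℝ} (hΦ : AEMeasurable Φ μ) (hΦ' : ∀ i, AEMeasurable (Φ' i) μ)
    (hlow : ∀ ε : ℝ, 0 < ε → ∃ M : ℝ, ∀ u : X,
      (M - ε * ‖u‖ ^ 2 ≤ Φ u) ∧ ∀ i, M - ε * ‖u‖ ^ 2 ≤ Φ' i u)
    (hup : ∀ r : ℝ, 0 < r → ∃ K : ℝ, 0 < K ∧ ∀ u : X, ‖u‖ < r → (Φ u ≤ K) ∧ ∀ i, Φ' i u ≤ K)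
    {Ψ : ι → ℝ}
    (happrox : ∀ ε : ℝ, 0 < ε → ∃ K' : ℝ, 0 < K' ∧ ∀ (u : X) (i : ι),
      |Φ u - Φ' i u| ≤ K' * Real.exp (ε * ‖u‖ ^ 2) * Ψ i) :
    ∃ C : ℝ, ∀ (i : ι) (L : NNReal) (ψ : X → ℝ), LipschitzWith L ψ →
      |∫ u, ψ u ∂posterior μ Φ - ∫ u, ψ u ∂posterior μ (Φ' i)| ≤ L * C * Ψ i := by
  have := isFiniteMeasure_of_integrable_exp_mul_sq_norm hμ hα.le
  obtain ⟨M, hM⟩ := hlow (α / 3) (by positivity)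
  obtain ⟨K', -, hK'⟩ := happrox (α / 3) (by positivity)
  choose! K _ hK using hup
  obtain ⟨z, hz, hzle⟩ := exists_pos_le_integral_exp_neg (μ := μ) K
  have hZ : z ≤ ∫ u, Real.exp (-Φ u) ∂μ :=
    hzle Φ (integrable_exp_neg_of_quadratic_le hμ hΦ (fun u => (hM u).1) (by linarith))
      fun r hr u hu => (hK r hr u hu).1
  have hZ' (i : ι) : z ≤ ∫ u, Real.exp (-Φ' i u) ∂μ :=
    hzle (Φ' i) (integrable_exp_neg_of_quadratic_le hμ (hΦ' i) (fun u => (hM u).2 i) (by linarith))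
      fun r hr u hu => (hK r hr u hu).2 i
  set m := Real.exp (-M) * (∫ u, ‖u‖ * Real.exp (α / 3 * ‖u‖ ^ 2) ∂μ) / z
  have hm (i : ι) : ∫ u, ‖u‖ ∂posterior μ (Φ' i) ≤ m :=
    integral_norm_posterior_le_of_quadratic_le hμ (hΦ' i) (fun u => (hM u).2 i) (by linarith)
      hz (hZ' i)
  set I := ∫ u, (‖u‖ + m) * Real.exp ((α / 3 + α / 3) * ‖u‖ ^ 2) ∂μ
  have hdiff (i : ι) (u : X) : |Φ u - Φ' i u| ≤ K' * Ψ i * Real.exp (α / 3 * ‖u‖ ^ 2) :=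
    (hK' u i).trans_eq (mul_right_comm _ _ _)
  refine ⟨Real.exp (-M) * I * K' / z, fun i L ψ hψ => ?_⟩
  calc |∫ u, ψ u ∂posterior μ Φ - ∫ u, ψ u ∂posterior μ (Φ' i)|
      ≤ L * (Real.exp (-M) * I * (K' * Ψ i)) / z :=
        abs_integral_posterior_sub_le_of_quadratic_le hμ hΦ (hΦ' i) (fun u => (hM u).1)
          (fun u => (hM u).2 i) (hdiff i) (by linarith) (by linarith) hz hZ (hm i) hψ
    _ = L * (Real.exp (-M) * I * K' / z) * Ψ i := by ring

end Stability

theorem stmt5 {X : Type*} [NormedAddCommGroup X] [NormedSpace ℝ X] [CompleteSpace X]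
    [TopologicalSpace.SeparableSpace X] [MeasurableSpace X] [BorelSpace X]
    (μ0 : Measure X) [IsProbabilityMeasure μ0]
    (α : ℝ) (hα : 0 < α)
    (hint : Integrable (fun u => Real.exp (α * ‖u‖ ^ 2)) μ0)
    (hball : ∀ (x : X) (r : ℝ), 0 < r → 0 < μ0 (Metric.ball x r))
    (Φ : X → ℝ) (ΦN : ℕ → X → ℝ)
    (hmeas : Measurable Φ) (hmeasN : ∀ N, Measurable (ΦN N))
    -- condition (i'), with constants uniform in N
    (hi : ∀ ε : ℝ, 0 < ε → ∃ M : ℝ, ∀ u : X,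
      (M - ε * ‖u‖ ^ 2 ≤ Φ u) ∧ ∀ N : ℕ, M - ε * ‖u‖ ^ 2 ≤ ΦN N u)
    -- condition (ii'), with constants uniform in N
    (hii : ∀ r : ℝ, 0 < r → ∃ K : ℝ, 0 < K ∧ ∀ u : X, ‖u‖ < r →
      (Φ u ≤ K) ∧ ∀ N : ℕ, ΦN N u ≤ K)
    (Ψ : ℕ → ℝ) (hΨ : Tendsto Ψ atTop (nhds 0))
    -- approximation property
    (happrox : ∀ ε : ℝ, 0 < ε → ∃ K' : ℝ, 0 < K' ∧ ∀ (u : X) (N : ℕ),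
      |Φ u - ΦN N u| ≤ K' * Real.exp (ε * ‖u‖ ^ 2) * Ψ N) :
    ∃ C : ℝ, ∀ N : ℕ, ∀ ψ : X → ℝ,
      Continuous ψ → (∃ B : ℝ, ∀ x, |ψ x| ≤ B) → LipschitzWith 1 ψ →
      |(∫ u, ψ u ∂(posterior μ0 Φ)) - ∫ u, ψ u ∂(posterior μ0 (ΦN N))| ≤ C * Ψ N := by
  obtain ⟨C, hC⟩ := stmt5_general hα hint hmeas.aemeasurable (fun N => (hmeasN N).aemeasurable)
    hi hii happrox
  exact ⟨C, fun N ψ _ _ hψ => by simpa using hC N 1 ψ hψ⟩
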